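/- arXiv:2306.06402 — 4 statements merged into one kernel-verified Lean document; each statement's English description precedes it below -/
import Mathlib

section
/- Let γ, η : ℕ → ℝ be nonincreasing sequences with 0 < γ_j ≤ 1 and η_j > 0 for all j, and suppose the sequence j ↦ γ_j / η_j is nonincreasing. Let d : ℕ → ℝ be nonnegative, let n ≤ t be natural numbers, and let R ≥ 0 satisfy d_{t'} ≤ R² for all t' ≤ n. Then ∑_{t'=0}^{t} (∏_{j=t'+1}^{t} (1 − γ_j)) · γ_{t'} · d_{t'} ≤ R² · (1 − γ_t)^{t−n} / γ_t + (γ_n / η_n) · ∑_{t'=n+1}^{t} η_{t'} · d_{t'}. -/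
/-!
For `n ≤ t` the weight at time `t` of an index `s ≤ n` is its weight at time `n`, damped by
`∏_{j=n+1}^{t} (1 - γ j)`. The weights at time `n` telescope to `1 - ∏_{j=0}^{n} (1 - γ j) ≤ 1`, so
the head is at most the damping factor times a bound for `d`, and the damping factor is at most
`(1 - γ t) ^ (t - n)` by monotonicity of `γ`. In the tail the weight of `s` is at most
`γ s = (γ s / η s) * η s ≤ (γ n / η n) * η s`.
-/

open Finset

/-- The weight of the `s`-th sample in the exponential average at time `t ≥ s` with rates `γ`, that
is, the coefficient of `d s` in `x t`, where `x 0 = γ 0 * d 0` and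
`x (t + 1) = (1 - γ (t + 1)) * x t + γ (t + 1) * d (t + 1)`. For `t < s` its value is `γ s`. -/
def expAvgWeight {A : Type*} [CommRing A] (γ : ℕ → A) (t s : ℕ) : A :=
  (∏ j ∈ Icc (s + 1) t, (1 - γ j)) * γ s

section CommRing

variable {A : Type*} [CommRing A] (γ : ℕ → A)

theorem expAvgWeight_eq_prod_sub_prod {s t : ℕ} (hst : s ≤ t) :
    expAvgWeight γ t s = ∏ j ∈ Icc (s + 1) t, (1 - γ j) - ∏ j ∈ Icc s t, (1 - γ j) := by
  rw [expAvgWeight, ← mul_prod_Ioc_eq_prod_Icc hst, ← Icc_add_one_left_eq_Ioc]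
  ring

theorem sum_range_expAvgWeight (t : ℕ) :
    ∑ s ∈ range (t + 1), expAvgWeight γ t s = 1 - ∏ j ∈ Icc 0 t, (1 - γ j) := by
  calc ∑ s ∈ range (t + 1), expAvgWeight γ t s
      = ∑ s ∈ range (t + 1), (∏ j ∈ Icc (s + 1) t, (1 - γ j) - ∏ j ∈ Icc s t, (1 - γ j)) :=
        sum_congr rfl fun s hs => expAvgWeight_eq_prod_sub_prod γ (mem_range_succ_iff.1 hs)
    _ = ∏ j ∈ Icc (t + 1) t, (1 - γ j) - ∏ j ∈ Icc 0 t, (1 - γ j) :=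
        sum_range_sub (fun s => ∏ j ∈ Icc s t, (1 - γ j)) (t + 1)
    _ = 1 - ∏ j ∈ Icc 0 t, (1 - γ j) := by rw [Icc_eq_empty (by lia), prod_empty]

theorem expAvgWeight_eq_prod_mul {s n t : ℕ} (hsn : s ≤ n) (hnt : n ≤ t) :
    expAvgWeight γ t s = (∏ j ∈ Icc (n + 1) t, (1 - γ j)) * expAvgWeight γ n s := by
  simp only [expAvgWeight, Icc_add_one_left_eq_Ioc]
  rw [← prod_Ioc_consecutive _ hsn hnt]
  ring

theorem sum_expAvgWeight_mul_split (d : ℕ → A) {n t : ℕ} (hnt : n ≤ t) :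
    ∑ s ∈ range (t + 1), expAvgWeight γ t s * d s =
      (∏ j ∈ Icc (n + 1) t, (1 - γ j)) * ∑ s ∈ range (n + 1), expAvgWeight γ n s * d s +
        ∑ s ∈ Icc (n + 1) t, expAvgWeight γ t s * d s := by
  rw [← sum_range_add_sum_Ico _ (Nat.add_le_add_right hnt 1), Ico_add_one_right_eq_Icc, mul_sum]
  congr 1
  refine sum_congr rfl fun s hs => ?_
  rw [expAvgWeight_eq_prod_mul γ (mem_range_succ_iff.1 hs) hnt, mul_assoc]

end CommRing

section OrderedCommRing

variable {A : Type*} [CommRing A] [PartialOrder A] [IsOrderedRing A] {γ : ℕ → A}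

theorem prod_one_sub_nonneg {ι : Type*} {f : ι → A} {S : Finset ι} (hf : ∀ i ∈ S, f i ≤ 1) :
    0 ≤ ∏ i ∈ S, (1 - f i) :=
  prod_nonneg fun i hi => sub_nonneg.2 (hf i hi)

theorem prod_Icc_one_sub_le_pow (hγ_anti : Antitone γ) (hγ_le : ∀ j, γ j ≤ 1) (n t : ℕ) :
    ∏ j ∈ Icc (n + 1) t, (1 - γ j) ≤ (1 - γ t) ^ (t - n) := by
  calc ∏ j ∈ Icc (n + 1) t, (1 - γ j) ≤ ∏ _j ∈ Icc (n + 1) t, (1 - γ t) :=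
        prod_le_prod (fun j _ => sub_nonneg.2 (hγ_le j))
          fun j hj => sub_le_sub_left (hγ_anti (mem_Icc.1 hj).2) 1
    _ = (1 - γ t) ^ (t - n) := by rw [prod_const, Nat.card_Icc, Nat.add_sub_add_right]

theorem expAvgWeight_nonneg (hγ_nonneg : ∀ j, 0 ≤ γ j) (hγ_le : ∀ j, γ j ≤ 1) (t s : ℕ) :
    0 ≤ expAvgWeight γ t s :=
  mul_nonneg (prod_one_sub_nonneg fun j _ => hγ_le j) (hγ_nonneg s)

theorem expAvgWeight_le (hγ_nonneg : ∀ j, 0 ≤ γ j) (hγ_le : ∀ j, γ j ≤ 1) (t s : ℕ) :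
    expAvgWeight γ t s ≤ γ s :=
  mul_le_of_le_one_left (hγ_nonneg s) <|
    prod_le_one (fun j _ => sub_nonneg.2 (hγ_le j)) fun j _ => sub_le_self 1 (hγ_nonneg j)

theorem sum_range_expAvgWeight_mul_le (hγ_nonneg : ∀ j, 0 ≤ γ j) (hγ_le : ∀ j, γ j ≤ 1)
    {d : ℕ → A} {C : A} (hC : 0 ≤ C) {n : ℕ} (hd_le : ∀ s ≤ n, d s ≤ C) :
    ∑ s ∈ range (n + 1), expAvgWeight γ n s * d s ≤ C := by
  have weights_le_one : ∑ s ∈ range (n + 1), expAvgWeight γ n s ≤ 1 := by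
    rw [sum_range_expAvgWeight]
    exact sub_le_self 1 (prod_one_sub_nonneg fun j _ => hγ_le j)
  calc ∑ s ∈ range (n + 1), expAvgWeight γ n s * d s
      ≤ ∑ s ∈ range (n + 1), expAvgWeight γ n s * C :=
        sum_le_sum fun s hs => mul_le_mul_of_nonneg_left (hd_le s (mem_range_succ_iff.1 hs))
          (expAvgWeight_nonneg hγ_nonneg hγ_le n s)
    _ = (∑ s ∈ range (n + 1), expAvgWeight γ n s) * C := (sum_mul ..).symm
    _ ≤ C := mul_le_of_le_one_left hC weights_le_one

theorem sum_expAvgWeight_mul_le_mul_sum (hγ_nonneg : ∀ j, 0 ≤ γ j) (hγ_le : ∀ j, γ j ≤ 1)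
    {η d : ℕ → A} {S : Finset ℕ} {c : A} (hγη : ∀ s ∈ S, γ s ≤ c * η s) (hd : ∀ s ∈ S, 0 ≤ d s)
    (t : ℕ) :
    ∑ s ∈ S, expAvgWeight γ t s * d s ≤ c * ∑ s ∈ S, η s * d s := by
  rw [mul_sum]
  refine sum_le_sum fun s hs => ?_
  rw [← mul_assoc]
  exact mul_le_mul_of_nonneg_right ((expAvgWeight_le hγ_nonneg hγ_le t s).trans (hγη s hs))
    (hd s hs)

end OrderedCommRing

theorem weighted_error_sum_split_general
    {K : Type*} [Field K] [LinearOrder K] [IsStrictOrderedRing K] {γ η d : ℕ → K}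
    (hγ_anti : Antitone γ) (hγ_nonneg : ∀ j, 0 ≤ γ j) (hγ_le : ∀ j, γ j ≤ 1)
    (hη_pos : ∀ j, 0 < η j) (hratio_anti : Antitone fun j => γ j / η j)
    (hd : ∀ s, 0 ≤ d s) {n t : ℕ} (hnt : n ≤ t) {C : K} (hd_le : ∀ s ≤ n, d s ≤ C) :
    ∑ s ∈ range (t + 1), expAvgWeight γ t s * d s
      ≤ C * (1 - γ t) ^ (t - n) + γ n / η n * ∑ s ∈ Icc (n + 1) t, η s * d s := by
  have hC : 0 ≤ C := (hd 0).trans (hd_le 0 n.zero_le)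
  have rate_le : ∀ s ∈ Icc (n + 1) t, γ s ≤ γ n / η n * η s := fun s hs =>
    (div_le_iff₀ (hη_pos s)).1 (hratio_anti ((Nat.le_succ n).trans (mem_Icc.1 hs).1))
  rw [sum_expAvgWeight_mul_split γ d hnt, mul_comm C]
  refine add_le_add ?head ?tail
  case head =>
    exact mul_le_mul_of_nonneg (prod_Icc_one_sub_le_pow hγ_anti hγ_le n t)
      (sum_range_expAvgWeight_mul_le hγ_nonneg hγ_le hC hd_le)
      (prod_one_sub_nonneg fun j _ => hγ_le j) hC
  case tail =>
    exact sum_expAvgWeight_mul_le_mul_sum hγ_nonneg hγ_le rate_le (fun s _ => hd s) t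

/-- Splitting step for weighted sums of squared errors:
`∑_{t'=0}^{t} (∏_{j=t'+1}^{t} (1 − γ_j)) γ_{t'} d_{t'}
  ≤ R² (1 − γ_t)^{t−n} / γ_t + (γ_n / η_n) ∑_{t'=n+1}^{t} η_{t'} d_{t'}`. -/
theorem weighted_error_sum_split
    (γ η d : ℕ → ℝ)
    (hγ_anti : Antitone γ) (hη_anti : Antitone η)
    (hγ_pos : ∀ j, 0 < γ j) (hγ_le : ∀ j, γ j ≤ 1)
    (hη_pos : ∀ j, 0 < η j)
    (hratio_anti : Antitone fun j => γ j / η j)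
    (hd : ∀ t', 0 ≤ d t')
    (n t : ℕ) (hnt : n ≤ t)
    (R : ℝ) (hR : 0 ≤ R)
    (hd_le : ∀ t' ≤ n, d t' ≤ R ^ 2) :
    ∑ t' ∈ Finset.range (t + 1),
        (∏ j ∈ Finset.Icc (t' + 1) t, (1 - γ j)) * γ t' * d t'
      ≤ R ^ 2 * (1 - γ t) ^ (t - n) / γ t
        + γ n / η n * ∑ t' ∈ Finset.Icc (n + 1) t, η t' * d t' := by
  refine (weighted_error_sum_split_general hγ_anti (fun j => (hγ_pos j).le) hγ_le hη_pos hratio_anti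
    hd hnt hd_le).trans (add_le_add_left (le_div_self ?_ (hγ_pos t) (hγ_le t)) _)
  exact mul_nonneg (sq_nonneg R) (pow_nonneg (sub_nonneg.2 (hγ_le t)) _)
end

section
/- Let E be a real normed vector space, let γ : ℕ → ℝ be nonincreasing with 0 < γ_j ≤ 1 for all j, let n < t be natural numbers, and let x, y, x̄, ȳ : ℕ → E be sequences satisfying x̄_k = (1 − γ_k)·x̄_{k−1} + γ_k·x_k and ȳ_k = (1 − γ_k)·ȳ_{k−1} + γ_k·y_k for all k with n < k ≤ t, together with x̄_n = ȳ_n. Then ‖x̄_t − ȳ_t‖ ≤ (γ_{n+1}/γ_t) · max_{n < t' ≤ t} ‖x_{t'} − y_{t'}‖. -/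
/-!
The difference of two averaged sequences satisfies the same averaging recursion, driven by the
difference of the driving sequences. Each of its terms is therefore a convex combination of the
preceding term and the driving term; since it starts at `0`, it never leaves the closed ball of
radius `max ‖x_k − y_k‖`. The factor `γ_{n+1}/γ_t` is at least `1` because `γ` is nonincreasing.
-/

/-- The sequence `xbar` is an exponential average of `x` with weights `γ` on the steps `n < k ≤ t`.
Its initial value `xbar n` is arbitrary. Every such `k` is positive, so the natural number
subtraction `k - 1` is never truncated. -/
def IsExponentialAverage {𝕜 E : Type*} [Ring 𝕜] [AddCommMonoid E] [SMul 𝕜 E]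
    (γ : ℕ → 𝕜) (n t : ℕ) (x xbar : ℕ → E) : Prop :=
  ∀ k, n < k → k ≤ t → xbar k = (1 - γ k) • xbar (k - 1) + γ k • x k

namespace IsExponentialAverage

theorem sub {𝕜 E : Type*} [Ring 𝕜] [AddCommGroup E] [Module 𝕜 E]
    {γ : ℕ → 𝕜} {n t : ℕ} {x y xbar ybar : ℕ → E}
    (hx : IsExponentialAverage γ n t x xbar) (hy : IsExponentialAverage γ n t y ybar) :
    IsExponentialAverage γ n t (x - y) (xbar - ybar) := by
  intro k hnk hkt
  simp only [Pi.sub_apply, smul_sub]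
  rw [hx k hnk hkt, hy k hnk hkt, add_sub_add_comm]

theorem mem_of_convex {𝕜 E : Type*} [Ring 𝕜] [PartialOrder 𝕜] [IsOrderedAddMonoid 𝕜]
    [AddCommMonoid E] [SMul 𝕜 E] {γ : ℕ → 𝕜} {n t : ℕ} {x xbar : ℕ → E} {s : Set E}
    (h : IsExponentialAverage γ n t x xbar) (hs : Convex 𝕜 s)
    (hγ : ∀ k, n < k → k ≤ t → γ k ∈ Set.Icc 0 1)
    (hinit : xbar n ∈ s) (hmem : ∀ k, n < k → k ≤ t → x k ∈ s)
    {k : ℕ} (hnk : n ≤ k) (hkt : k ≤ t) : xbar k ∈ s := by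
  induction k, hnk using Nat.le_induction with
  | base => exact hinit
  | succ k hnk ih =>
    have hlt : n < k + 1 := Nat.lt_succ_of_le hnk
    obtain ⟨hγ_nonneg, hγ_le⟩ := hγ (k + 1) hlt hkt
    rw [h (k + 1) hlt hkt, Nat.add_sub_cancel]
    exact hs (ih (Nat.le_of_succ_le hkt)) (hmem (k + 1) hlt hkt)
      (sub_nonneg.mpr hγ_le) hγ_nonneg (sub_add_cancel 1 _)

end IsExponentialAverage

theorem exponential_averaging_coupling_bound_general
    {E : Type*} [SeminormedAddCommGroup E] [NormedSpace ℝ E]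
    {γ : ℕ → ℝ} {n t : ℕ} (hnt : n < t)
    (hγ : ∀ k, n < k → k ≤ t → γ k ∈ Set.Icc 0 1)
    {x y xbar ybar : ℕ → E}
    (hx : IsExponentialAverage γ n t x xbar) (hy : IsExponentialAverage γ n t y ybar)
    (hinit : xbar n = ybar n) :
    ‖xbar t - ybar t‖ ≤
      (Finset.Icc (n + 1) t).sup' (Finset.nonempty_Icc.mpr hnt) (fun k => ‖x k - y k‖) := by
  set M := (Finset.Icc (n + 1) t).sup' (Finset.nonempty_Icc.mpr hnt) (fun k => ‖x k - y k‖)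
  have driving_le : ∀ k, n < k → k ≤ t → ‖x k - y k‖ ≤ M := fun k hnk hkt =>
    Finset.le_sup' (fun k => ‖x k - y k‖) (Finset.mem_Icc.mpr ⟨hnk, hkt⟩)
  have M_nonneg : 0 ≤ M := (norm_nonneg _).trans (driving_le t hnt le_rfl)
  have init_mem : (xbar - ybar) n ∈ Metric.closedBall 0 M := by
    rw [Pi.sub_apply, hinit, sub_self]
    exact Metric.mem_closedBall_self M_nonneg
  have driving_mem : ∀ k, n < k → k ≤ t → (x - y) k ∈ Metric.closedBall 0 M :=
    fun k hnk hkt => mem_closedBall_zero_iff.mpr (driving_le k hnk hkt)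
  exact mem_closedBall_zero_iff.mp <|
    (hx.sub hy).mem_of_convex (convex_closedBall 0 M) hγ init_mem driving_mem hnt.le le_rfl

/-- Coupling bound for two exponential averaging recursions agreeing at index `n`:
`‖x̄_t − ȳ_t‖ ≤ (γ_{n+1}/γ_t) · max_{n < t' ≤ t} ‖x_{t'} − y_{t'}‖`. -/
theorem exponential_averaging_coupling_bound
    {E : Type*} [NormedAddCommGroup E] [NormedSpace ℝ E]
    (γ : ℕ → ℝ) (hγ_anti : Antitone γ)
    (hγ_pos : ∀ j, 0 < γ j) (hγ_le : ∀ j, γ j ≤ 1)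
    (n t : ℕ) (hnt : n < t)
    (x y xbar ybar : ℕ → E)
    (hx : ∀ k, n < k → k ≤ t → xbar k = (1 - γ k) • xbar (k - 1) + γ k • x k)
    (hy : ∀ k, n < k → k ≤ t → ybar k = (1 - γ k) • ybar (k - 1) + γ k • y k)
    (hinit : xbar n = ybar n) :
    ‖xbar t - ybar t‖
      ≤ γ (n + 1) / γ t *
          (Finset.Icc (n + 1) t).sup' (Finset.nonempty_Icc.mpr (by omega))
            (fun t' => ‖x t' - y t'‖) := by
  have h := exponential_averaging_coupling_bound_general hnt
    (fun k _ _ => ⟨(hγ_pos k).le, hγ_le k⟩) hx hy hinit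
  exact h.trans <| le_mul_of_one_le_left ((norm_nonneg _).trans h) <|
    (one_le_div (hγ_pos t)).mpr (hγ_anti hnt)
end

section
/- Let E be a real normed vector space. Let α, e, δ : ℕ → ℝ be sequences with 0 < α_t ≤ 1, e_t ≥ 0, δ_t ≥ 0, ∑_t α_t = ∞, ∑_t α_t·e_t < ∞, and δ_t/α_t → 0 as t → ∞. Let x, y, z : ℕ → E satisfy x_t = (1 − α_t)·x_{t−1} + α_t·y_t, ‖y_t − z_t‖ ≤ e_t, and ‖z_t − z_{t−1}‖ ≤ δ_t for all t ≥ 1. Then ‖x_t − z_t‖ → 0 as t → ∞. -/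
open Filter

/-!
The tracking error `u t = ‖x t - z t‖` satisfies
`u (t + 1) ≤ (1 - a t) * u t + b t + c t` with `a t = α (t + 1)`, `b = o(a)` and `c` summable.

Adding to `u` the tail `∑_{k ≥ t} c k`, which tends to zero, turns the summable perturbation into
one that is negligible relative to `a`. Once `b ≤ ε * a`, the recursion contracts `u - ε` by the
factors `1 - a t`, and the product of these factors vanishes because `∑ a` diverges.
-/

open Asymptotics Finset Topology

section Recursion

variable {a b c u : ℕ → ℝ}

lemma tendsto_prod_one_sub_zero_of_not_summable (ha_mem : ∀ n, a n ∈ Set.Icc 0 1)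
    (ha_div : ¬ Summable a) : Tendsto (fun n ↦ ∏ k ∈ range n, (1 - a k)) atTop (𝓝 0) := by
  have hsum : Tendsto (fun n ↦ ∑ k ∈ range n, a k) atTop atTop :=
    (not_summable_iff_tendsto_nat_atTop_of_nonneg fun n ↦ (ha_mem n).1).1 ha_div
  refine squeeze_zero (fun n ↦ prod_nonneg fun k _ ↦ sub_nonneg.2 (ha_mem k).2) (fun n ↦ ?_)
    (Real.tendsto_exp_neg_atTop_nhds_zero.comp hsum)
  calc ∏ k ∈ range n, (1 - a k)
      ≤ ∏ k ∈ range n, Real.exp (-a k) :=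
        prod_le_prod (fun k _ ↦ sub_nonneg.2 (ha_mem k).2) fun k _ ↦ Real.one_sub_le_exp_neg (a k)
    _ = Real.exp (-∑ k ∈ range n, a k) := by rw [← Real.exp_sum, sum_neg_distrib]

lemma tendsto_prod_Ico_one_sub_zero_of_not_summable {N : ℕ} (ha_mem : ∀ n ≥ N, a n ∈ Set.Icc 0 1)
    (ha_div : ¬ Summable a) : Tendsto (fun n ↦ ∏ k ∈ Ico N n, (1 - a k)) atTop (𝓝 0) := by
  have hshift : ¬ Summable fun k ↦ a (N + k) := by
    simpa only [add_comm N, summable_nat_add_iff] using ha_div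
  simp only [prod_Ico_eq_prod_range]
  exact (tendsto_prod_one_sub_zero_of_not_summable (fun k ↦ ha_mem _ (N.le_add_right k))
    hshift).comp (tendsto_sub_atTop_nat N)

lemma eventually_lt_of_le_one_sub_mul_add_isLittleO (ha_mem : ∀ᶠ n in atTop, a n ∈ Set.Icc 0 1)
    (ha_div : ¬ Summable a) (hb : b =o[atTop] a)
    (hu : ∀ᶠ n in atTop, u (n + 1) ≤ (1 - a n) * u n + b n) {ε : ℝ} (hε : 0 < ε) :
    ∀ᶠ n in atTop, u n < ε := by
  obtain ⟨N, hN⟩ := eventually_atTop.1 (ha_mem.and ((hb.bound (half_pos hε)).and hu))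
  have hcontract : ∀ n ≥ N, u (n + 1) - ε / 2 ≤ (1 - a n) * (u n - ε / 2) + 0 := by
    intro n hn
    obtain ⟨ha_mem, hb_le, hu_succ⟩ := hN n hn
    rw [Real.norm_of_nonneg ha_mem.1] at hb_le
    linarith [Real.le_norm_self (b n)]
  have hbound : ∀ n ≥ N, u n - ε / 2 ≤ (u N - ε / 2) * ∏ k ∈ Ico N n, (1 - a k) := by
    intro n hn
    simpa only [zero_mul, sum_const_zero, add_zero] using
      discrete_gronwall_prod_general (u := fun n ↦ u n - ε / 2) (b := fun _ ↦ 0) hcontract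
        (fun n hn ↦ sub_nonneg.2 (hN n hn).1.2) hn
  have hlim : Tendsto (fun n ↦ (u N - ε / 2) * ∏ k ∈ Ico N n, (1 - a k)) atTop (𝓝 0) := by
    simpa only [mul_zero] using (tendsto_prod_Ico_one_sub_zero_of_not_summable
      (fun n hn ↦ (hN n hn).1) ha_div).const_mul (u N - ε / 2)
  filter_upwards [hlim.eventually_lt_const (half_pos hε), eventually_ge_atTop N] with n hn hNn
  linarith [hbound n hNn]

lemma tendsto_zero_of_le_one_sub_mul_add_isLittleO_add_summable
    (ha_mem : ∀ᶠ n in atTop, a n ∈ Set.Icc 0 1) (ha_div : ¬ Summable a) (hb : b =o[atTop] a)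
    (hc : Summable c) (hu_nonneg : ∀ᶠ n in atTop, 0 ≤ u n)
    (hu : ∀ᶠ n in atTop, u (n + 1) ≤ (1 - a n) * u n + b n + c n) :
    Tendsto u atTop (𝓝 0) := by
  let tail (n : ℕ) : ℝ := ∑' k, c k - ∑ k ∈ range n, c k
  have htail : Tendsto tail atTop (𝓝 0) := by
    simpa only [sub_self] using hc.hasSum.tendsto_sum_nat.const_sub (∑' k, c k)
  have htail_succ (n : ℕ) : tail (n + 1) = tail n - c n := by
    simp only [tail, sum_range_succ, sub_add_eq_sub_sub]
  have hperturb : (fun n ↦ b n + a n * tail n) =o[atTop] a := by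
    have htail_mul : (fun n ↦ a n * tail n) =o[atTop] a := by
      simpa only [mul_one] using
        (isBigO_refl a atTop).mul_isLittleO ((isLittleO_one_iff ℝ).2 htail)
    exact hb.add htail_mul
  have hrec : ∀ᶠ n in atTop, u (n + 1) + tail (n + 1) ≤
      (1 - a n) * (u n + tail n) + (b n + a n * tail n) := by
    filter_upwards [hu] with n hn
    linarith [htail_succ n]
  refine tendsto_order.2 ⟨fun ε hε ↦ hu_nonneg.mono fun n hn ↦ hε.trans_le hn, fun ε hε ↦ ?_⟩
  filter_upwards [htail.eventually_const_lt (neg_lt_zero.2 (half_pos hε)),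
    eventually_lt_of_le_one_sub_mul_add_isLittleO (u := fun n ↦ u n + tail n) ha_mem ha_div hperturb
      hrec (half_pos hε)] with n htail_n hsum_n
  linarith

end Recursion

section Tracking

variable {E : Type*} [SeminormedAddCommGroup E] [NormedSpace ℝ E]

lemma norm_average_sub_le {α e δ : ℝ} (hα : α ∈ Set.Icc 0 1) {x y z z' : E}
    (hy : ‖y - z'‖ ≤ e) (hz : ‖z' - z‖ ≤ δ) :
    ‖(1 - α) • x + α • y - z'‖ ≤ (1 - α) * ‖x - z‖ + δ + α * e := by
  have hα' : 0 ≤ 1 - α := sub_nonneg.2 hα.2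
  have hdrift : ‖x - z'‖ ≤ ‖x - z‖ + δ :=
    (norm_sub_le_norm_sub_add_norm_sub x z z').trans (by rw [norm_sub_rev z z']; gcongr)
  have hδ : 0 ≤ δ := (norm_nonneg _).trans hz
  calc ‖(1 - α) • x + α • y - z'‖
      = ‖(1 - α) • (x - z') + α • (y - z')‖ := by congr 1; module
    _ ≤ (1 - α) * ‖x - z'‖ + α * ‖y - z'‖ := by
        rw [← norm_smul_of_nonneg hα', ← norm_smul_of_nonneg hα.1]
        exact norm_add_le _ _
    _ ≤ (1 - α) * (‖x - z‖ + δ) + α * e := by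
        gcongr
        exact hα.1
    _ ≤ (1 - α) * ‖x - z‖ + δ + α * e := by
        linarith [mul_nonneg hα.1 hδ]

theorem recursive_average_tracks_moving_target_general {α e δ : ℕ → ℝ} {x y z : ℕ → E}
    (hα_mem : ∀ᶠ t in atTop, α t ∈ Set.Icc 0 1) (hα_div : ¬ Summable α)
    (hαe : Summable fun t ↦ α t * e t) (hδα : δ =o[atTop] α)
    (hrec : ∀ᶠ t in atTop, x (t + 1) = (1 - α (t + 1)) • x t + α (t + 1) • y (t + 1))
    (hy : ∀ᶠ t in atTop, ‖y t - z t‖ ≤ e t)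
    (hz : ∀ᶠ t in atTop, ‖z (t + 1) - z t‖ ≤ δ (t + 1)) :
    Tendsto (fun t ↦ ‖x t - z t‖) atTop (𝓝 0) := by
  have hsucc := tendsto_add_atTop_nat 1
  have hstep : ∀ᶠ t in atTop, ‖x (t + 1) - z (t + 1)‖ ≤
      (1 - α (t + 1)) * ‖x t - z t‖ + δ (t + 1) + α (t + 1) * e (t + 1) := by
    filter_upwards [hsucc.eventually hα_mem, hrec, hsucc.eventually hy, hz] with t hα hrec hy hz
    rw [hrec]
    exact norm_average_sub_le hα hy hz
  exact tendsto_zero_of_le_one_sub_mul_add_isLittleO_add_summable (hsucc.eventually hα_mem)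
    (mt (summable_nat_add_iff 1).1 hα_div) (hδα.comp_tendsto hsucc)
    ((summable_nat_add_iff 1).2 hαe) (.of_forall fun t ↦ norm_nonneg _) hstep

end Tracking

/-- Deterministic tracking lemma: the averaged estimate
`x_t = (1 − α_t) x_{t−1} + α_t y_t` tracks the slowly moving target `z_t`
when the per-step errors `‖y_t − z_t‖ ≤ e_t` are summable against `α` and the
target drift `‖z_t − z_{t−1}‖ ≤ δ_t` is negligible relative to `α_t`. -/
theorem recursive_average_tracks_moving_target
    {E : Type*} [NormedAddCommGroup E] [NormedSpace ℝ E]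
    (α e δ : ℕ → ℝ)
    (hα_pos : ∀ t, 0 < α t) (hα_le : ∀ t, α t ≤ 1)
    (he : ∀ t, 0 ≤ e t) (hδ : ∀ t, 0 ≤ δ t)
    (hα_div : ¬ Summable α)
    (hαe : Summable fun t => α t * e t)
    (hδα : Tendsto (fun t => δ t / α t) atTop (nhds 0))
    (x y z : ℕ → E)
    (hrec : ∀ t, 1 ≤ t → x t = (1 - α t) • x (t - 1) + α t • y t)
    (hy : ∀ t, 1 ≤ t → ‖y t - z t‖ ≤ e t)
    (hz : ∀ t, 1 ≤ t → ‖z t - z (t - 1)‖ ≤ δ t) :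
    Tendsto (fun t => ‖x t - z t‖) atTop (nhds 0) := by
  exact recursive_average_tracks_moving_target_general
    (.of_forall fun t ↦ ⟨(hα_pos t).le, hα_le t⟩) hα_div hαe
    ((isLittleO_iff_tendsto fun _ ht ↦ absurd ht (hα_pos _).ne').2 hδα)
    (.of_forall fun t ↦ hrec (t + 1) t.succ_pos) (eventually_atTop.2 ⟨1, hy⟩)
    (.of_forall fun t ↦ hz (t + 1) t.succ_pos)
end

section
/- Let κ₁, κ₂, κ₃, κ₄ be real numbers satisfying 1 > 2κ₂ − 1 > κ₁ > 1/2, min(κ₁/2 + κ₂/2 + κ₃/2 − 1/2, κ₁ + κ₃) > 3/5 > κ₄ > 0, κ₁ + κ₄/2 − κ₃/2 > 1, and κ₁ + κ₃/2 + κ₄/2 > 13/10. Let m > 0 and define, for t ≥ 3, α_t = m^{−1/2}·t^{−κ₁}, β_t = m^{−1/2}·t^{−κ₂}, η_t = m^{−1/2}·t^{−κ₃}, γ_t = t^{−κ₄}, and n_t = t − ⌈t^{3/5}⌉ (so n_t ≥ 1 for t ≥ 3). Then all of the following series converge: (i) ∑_{t≥3} α_t·(1 − γ_t)^{(t − n_t)/2}·γ_{n_t}^{−1/2};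 (ii) ∑_{t≥3} α_t·γ_{n_t}^{1/2}·η_{n_t}^{−1/2}; (iii) ∑_{t≥3} m·α_t·γ_{n_t}^{1/2}·η_{n_t}^{1/2}·t^{3/10}; (iv) ∑_{t≥3} m·α_t·η_{n_t}·t^{−2/5}; (v) ∑_{t≥3} m·α_t·η_{n_t}·β_{n_t}·t^{6/5}. -/
/-!
Since `δ < 1`, the delayed index `n t = t - ⌈t ^ δ⌉` is asymptotic to `t`, so each step size
evaluated at `n t` has the same polynomial order as at `t`. Every series but the first is then
dominated by `∑ t ^ p` for an explicit `p < -1`. In the first one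
`(1 - γ t) ^ ((t - n t) / 2) ≤ exp (-γ t * t ^ δ / 2)`, and `γ t * t ^ δ` is of order
`t ^ (δ - κ₄)` with `κ₄ < δ`, so this factor decays faster than any power of `t`.
-/

open Filter Asymptotics

section PolynomialOrder

variable {a b : ℕ → ℝ} {p q : ℝ}

theorem isTheta_natCast_rpow_of_eq_const_mul {c : ℝ} (hc : c ≠ 0)
    (ha : ∀ t : ℕ, 1 ≤ t → a t = c * (t : ℝ) ^ p) : a =Θ[atTop] fun t ↦ (t : ℝ) ^ p :=
  EventuallyEq.trans_isTheta ((eventually_ge_atTop 1).mono ha)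
    ((isTheta_const_mul_left hc).2 (isTheta_refl _ _))

theorem eventually_nonneg_of_eq_const_mul_rpow {c : ℝ} (hc : 0 ≤ c)
    (ha : ∀ t : ℕ, 1 ≤ t → a t = c * (t : ℝ) ^ p) : 0 ≤ᶠ[atTop] a := by
  filter_upwards [eventually_ge_atTop 1] with t ht
  exact (mul_nonneg hc (Real.rpow_nonneg t.cast_nonneg p)).trans_eq (ha t ht).symm

theorem isTheta_rpow_natCast_rpow (ha : a =Θ[atTop] fun t ↦ (t : ℝ) ^ p) (ha₀ : 0 ≤ᶠ[atTop] a)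
    (q : ℝ) : (fun t ↦ a t ^ q) =Θ[atTop] fun t ↦ (t : ℝ) ^ (p * q) := by
  simpa only [← Real.rpow_mul (Nat.cast_nonneg _)] using
    ha.rpow (r := q) ha₀ (.of_forall fun t ↦ Real.rpow_nonneg t.cast_nonneg p)

theorem summable_mul_of_isBigO_natCast_rpow (ha : a =O[atTop] fun t ↦ (t : ℝ) ^ p)
    (hb : b =O[atTop] fun t ↦ (t : ℝ) ^ q) (hpq : p + q < -1) : Summable fun t ↦ a t * b t :=
  summable_of_isBigO_nat (Real.summable_nat_rpow.2 hpq)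
    (ha.mul_atTop_rpow_natCast_of_isBigO_rpow _ _ _ hb le_rfl)

end PolynomialOrder

section Reindexing

variable {a : ℕ → ℝ} {n : ℕ → ℕ} {p : ℝ}

theorem tendsto_atTop_of_isTheta_natCast (hn : (fun t ↦ (n t : ℝ)) =Θ[atTop] fun t ↦ (t : ℝ)) :
    Tendsto n atTop atTop := by
  have h := hn.tendsto_norm_atTop_iff
  simp only [Function.comp_def, RCLike.norm_natCast] at h
  exact tendsto_natCast_atTop_iff.1 (h.2 tendsto_natCast_atTop_atTop)

theorem isTheta_natCast_comp_rpow (hn : (fun t ↦ (n t : ℝ)) =Θ[atTop] fun t ↦ (t : ℝ)) :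
    (fun t ↦ (n t : ℝ) ^ p) =Θ[atTop] fun t ↦ (t : ℝ) ^ p :=
  hn.rpow (.of_forall fun _ ↦ Nat.cast_nonneg _) (.of_forall fun _ ↦ Nat.cast_nonneg _)

theorem isBigO_comp_natCast_rpow (ha : a =O[atTop] fun t ↦ (t : ℝ) ^ p)
    (hn : (fun t ↦ (n t : ℝ)) =Θ[atTop] fun t ↦ (t : ℝ)) :
    (fun t ↦ a (n t)) =O[atTop] fun t ↦ (t : ℝ) ^ p :=
  (ha.comp_tendsto (tendsto_atTop_of_isTheta_natCast hn)).trans_isTheta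
    (isTheta_natCast_comp_rpow hn)

theorem isTheta_comp_natCast_rpow (ha : a =Θ[atTop] fun t ↦ (t : ℝ) ^ p)
    (hn : (fun t ↦ (n t : ℝ)) =Θ[atTop] fun t ↦ (t : ℝ)) :
    (fun t ↦ a (n t)) =Θ[atTop] fun t ↦ (t : ℝ) ^ p :=
  ⟨isBigO_comp_natCast_rpow ha.1 hn, (isTheta_natCast_comp_rpow hn).2.trans
    (ha.2.comp_tendsto (tendsto_atTop_of_isTheta_natCast hn))⟩

theorem isTheta_comp_rpow_natCast_rpow (ha : a =Θ[atTop] fun t ↦ (t : ℝ) ^ p)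
    (ha₀ : 0 ≤ᶠ[atTop] a) (hn : (fun t ↦ (n t : ℝ)) =Θ[atTop] fun t ↦ (t : ℝ)) (q : ℝ) :
    (fun t ↦ a (n t) ^ q) =Θ[atTop] fun t ↦ (t : ℝ) ^ (p * q) :=
  isTheta_rpow_natCast_rpow (isTheta_comp_natCast_rpow ha hn)
    ((tendsto_atTop_of_isTheta_natCast hn).eventually ha₀) q

end Reindexing

section Delay

variable {d : ℕ → ℕ}

theorem eventually_le_of_isLittleO_natCast (hd : (fun t ↦ (d t : ℝ)) =o[atTop] fun t ↦ (t : ℝ)) :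
    ∀ᶠ t in atTop, d t ≤ t := by
  simpa using hd.eventuallyLE

theorem isEquivalent_natCast_sub (hd : (fun t ↦ (d t : ℝ)) =o[atTop] fun t ↦ (t : ℝ)) :
    (fun t ↦ ((t - d t : ℕ) : ℝ)) ~[atTop] fun t ↦ (t : ℝ) := by
  refine (IsEquivalent.refl.sub_isLittleO hd).congr_left ?_
  filter_upwards [eventually_le_of_isLittleO_natCast hd] with t ht
  exact (Nat.cast_sub ht).symm

theorem isLittleO_natCast_rpow_natCast {δ : ℝ} (hδ : δ < 1) :
    (fun t : ℕ ↦ (t : ℝ) ^ δ) =o[atTop] fun t ↦ (t : ℝ) := by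
  have h_div : (fun t : ℕ ↦ (t : ℝ) ^ (-(1 - δ))) =ᶠ[atTop] fun t ↦ (t : ℝ) ^ δ / t := by
    filter_upwards [eventually_ne_atTop 0] with t ht
    rw [neg_sub, Real.rpow_sub_one (Nat.cast_ne_zero.2 ht)]
  refine isLittleO_of_tendsto' ?_ (((tendsto_rpow_neg_atTop (sub_pos.2 hδ)).comp
    tendsto_natCast_atTop_atTop).congr' h_div)
  filter_upwards [eventually_ne_atTop 0] with t ht h_zero
  exact absurd h_zero (Nat.cast_ne_zero.2 ht)

theorem isLittleO_natCeil_rpow {δ : ℝ} (hδ : δ < 1) :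
    (fun t : ℕ ↦ (⌈(t : ℝ) ^ δ⌉₊ : ℝ)) =o[atTop] fun t ↦ (t : ℝ) := by
  have h_one : (fun _ : ℕ ↦ (1 : ℝ)) =o[atTop] fun t ↦ (t : ℝ) :=
    (isLittleO_const_id_atTop (1 : ℝ)).natCast_atTop
  refine (IsBigO.of_bound' (.of_forall fun t ↦ ?_)).trans_isLittleO
    ((isLittleO_natCast_rpow_natCast hδ).add h_one)
  have h_nonneg : 0 ≤ (t : ℝ) ^ δ := by positivity
  simpa [abs_of_nonneg (add_nonneg h_nonneg zero_le_one)] using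
    (Nat.ceil_lt_add_one h_nonneg).le

end Delay

section Decay

theorem one_sub_rpow_le_exp_neg_mul {x y : ℝ} (hx : x ≤ 1) (hy : 0 ≤ y) :
    (1 - x) ^ y ≤ Real.exp (-(x * y)) :=
  calc (1 - x) ^ y ≤ Real.exp (-x) ^ y :=
        Real.rpow_le_rpow (sub_nonneg.2 hx) (Real.one_sub_le_exp_neg x) hy
    _ = Real.exp (-(x * y)) := by rw [← Real.exp_mul, neg_mul]

theorem isBigO_exp_neg_natCast_rpow {x : ℕ → ℝ} {ε : ℝ} (hε : 0 < ε) (hx₀ : 0 ≤ᶠ[atTop] x)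
    (hx : (fun t : ℕ ↦ (t : ℝ) ^ ε) =O[atTop] x) (q : ℝ) :
    (fun t ↦ Real.exp (-x t)) =O[atTop] fun t ↦ (t : ℝ) ^ q := by
  obtain ⟨C, hC, hCx⟩ := hx.exists_pos
  have h_exp : (fun t : ℕ ↦ Real.exp (-C⁻¹ * (t : ℝ) ^ ε)) =O[atTop] fun t ↦ (t : ℝ) ^ q := by
    have h := (isLittleO_exp_neg_mul_rpow_atTop (inv_pos.2 hC) (q / ε)).isBigO.comp_tendsto
      ((tendsto_rpow_atTop hε).comp tendsto_natCast_atTop_atTop)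
    simpa only [Function.comp_def, ← Real.rpow_mul (Nat.cast_nonneg _),
      mul_div_cancel₀ q hε.ne'] using h
  refine (IsBigO.of_bound' ?_).trans h_exp
  filter_upwards [hCx.bound, hx₀] with t ht ht₀
  rw [Real.norm_of_nonneg (by positivity), Real.norm_of_nonneg ht₀] at ht
  rw [Real.norm_of_nonneg (Real.exp_nonneg _), Real.norm_of_nonneg (Real.exp_nonneg _),
    Real.exp_le_exp, neg_mul, neg_le_neg_iff]
  exact (inv_mul_le_iff₀ hC).2 ht

theorem isBigO_one_sub_rpow_natCast_rpow {γ d : ℕ → ℝ} {κ δ : ℝ} (hκ : 0 < κ) (hκδ : κ < δ)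
    (hγ : γ =Θ[atTop] fun t ↦ (t : ℝ) ^ (-κ)) (hγ₀ : 0 ≤ᶠ[atTop] γ)
    (hd : (fun t : ℕ ↦ (t : ℝ) ^ δ) =O[atTop] d) (hd₀ : 0 ≤ᶠ[atTop] d) (q : ℝ) :
    (fun t ↦ (1 - γ t) ^ d t) =O[atTop] fun t ↦ (t : ℝ) ^ q := by
  have h_zero : Tendsto γ atTop (nhds 0) :=
    hγ.tendsto_zero_iff.2 ((tendsto_rpow_neg_atTop hκ).comp tendsto_natCast_atTop_atTop)
  have h_le_one : ∀ᶠ t in atTop, γ t ≤ 1 := h_zero.eventually_le_const one_pos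
  have h_mul : (fun t : ℕ ↦ (t : ℝ) ^ (δ - κ)) =O[atTop] fun t ↦ γ t * d t := by
    refine (EventuallyEq.isBigO ?_).trans (hγ.2.mul hd)
    filter_upwards [eventually_gt_atTop 0] with t ht
    rw [← Real.rpow_add (Nat.cast_pos.2 ht), sub_eq_neg_add]
  have h_mul₀ : 0 ≤ᶠ[atTop] fun t ↦ γ t * d t := by
    filter_upwards [hγ₀, hd₀] with t using mul_nonneg
  refine (IsBigO.of_bound' ?_).trans
    (isBigO_exp_neg_natCast_rpow (sub_pos.2 hκδ) h_mul₀ h_mul q)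
  filter_upwards [h_le_one, hd₀] with t hγt hdt
  rw [Real.norm_of_nonneg (Real.rpow_nonneg (sub_nonneg.2 hγt) _),
    Real.norm_of_nonneg (Real.exp_nonneg _)]
  exact one_sub_rpow_le_exp_neg_mul hγt hdt

theorem isBigO_one_sub_rpow_half_delay {γ : ℕ → ℝ} {κ δ : ℝ} (hκ : 0 < κ) (hκδ : κ < δ)
    (hδ : δ < 1) (hγ : γ =Θ[atTop] fun t ↦ (t : ℝ) ^ (-κ)) (hγ₀ : 0 ≤ᶠ[atTop] γ) (q : ℝ) :
    (fun t : ℕ ↦ (1 - γ t) ^ (((t - (t - ⌈(t : ℝ) ^ δ⌉₊) : ℕ) : ℝ) / 2))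
      =O[atTop] fun t ↦ (t : ℝ) ^ q := by
  refine isBigO_one_sub_rpow_natCast_rpow hκ hκδ hγ hγ₀ (.of_bound 2 ?_)
    (.of_forall fun t ↦ by positivity) q
  filter_upwards [eventually_le_of_isLittleO_natCast (isLittleO_natCeil_rpow hδ)] with t ht
  rw [Nat.sub_sub_self ht, Real.norm_of_nonneg (by positivity), Real.norm_of_nonneg (by positivity),
    mul_div_cancel₀ _ two_ne_zero]
  exact Nat.le_ceil _

end Decay

theorem polynomial_step_sizes_satisfy_coupled_assumptions_general
    {α β η γ : ℕ → ℝ} {n : ℕ → ℕ} {κ₁ κ₂ κ₃ κ₄ δ : ℝ} (m : ℝ)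
    (hα : α =O[atTop] fun t ↦ (t : ℝ) ^ (-κ₁)) (hβ : β =O[atTop] fun t ↦ (t : ℝ) ^ (-κ₂))
    (hη : η =Θ[atTop] fun t ↦ (t : ℝ) ^ (-κ₃)) (hη₀ : 0 ≤ᶠ[atTop] η)
    (hγ : γ =Θ[atTop] fun t ↦ (t : ℝ) ^ (-κ₄)) (hγ₀ : 0 ≤ᶠ[atTop] γ)
    (hn : ∀ t : ℕ, n t = t - ⌈(t : ℝ) ^ δ⌉₊) (hδ : δ < 1) (hκ₄ : 0 < κ₄) (hκ₄δ : κ₄ < δ)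
    (h_ii : 1 < κ₁ + κ₄ / 2 - κ₃ / 2) (h_iii : 1 + δ / 2 < κ₁ + κ₃ / 2 + κ₄ / 2)
    (h_iv : δ < κ₁ + κ₃) (h_v : δ < κ₁ / 2 + κ₂ / 2 + κ₃ / 2 - 1 / 2) :
    Summable (fun t ↦
      α t * (1 - γ t) ^ (((t - n t : ℕ) : ℝ) / 2) * γ (n t) ^ (-(1 / 2) : ℝ)) ∧
    Summable (fun t ↦ α t * γ (n t) ^ (1 / 2 : ℝ) * η (n t) ^ (-(1 / 2) : ℝ)) ∧
    Summable (fun t ↦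
      m * α t * γ (n t) ^ (1 / 2 : ℝ) * η (n t) ^ (1 / 2 : ℝ) * (t : ℝ) ^ (δ / 2)) ∧
    Summable (fun t ↦ m * α t * η (n t) * (t : ℝ) ^ (δ - 1)) ∧
    Summable (fun t ↦ m * α t * η (n t) * β (n t) * (t : ℝ) ^ (2 * δ)) := by
  obtain rfl : n = fun t : ℕ ↦ t - ⌈(t : ℝ) ^ δ⌉₊ := funext hn
  have hn_theta := (isEquivalent_natCast_sub (isLittleO_natCeil_rpow hδ)).isTheta
  have hγ_delay := isTheta_comp_rpow_natCast_rpow hγ hγ₀ hn_theta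
  have hη_delay := isTheta_comp_rpow_natCast_rpow hη hη₀ hn_theta
  have hmα := hα.const_mul_left m
  have hmαη := hmα.mul_atTop_rpow_natCast_of_isBigO_rpow _ _ _
    (isBigO_comp_natCast_rpow hη.1 hn_theta) le_rfl
  refine ⟨?_, ?_, ?_, ?_, ?_⟩
  · -- This order of decay makes the total exponent `-2`.
    have h_decay := isBigO_one_sub_rpow_half_delay hκ₄ hκ₄δ hδ hγ hγ₀ (κ₁ - κ₄ / 2 - 2)
    exact summable_mul_of_isBigO_natCast_rpow
      (hα.mul_atTop_rpow_natCast_of_isBigO_rpow _ _ _ h_decay le_rfl) (hγ_delay _).1 (by linarith)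
  · exact summable_mul_of_isBigO_natCast_rpow
      (hα.mul_atTop_rpow_natCast_of_isBigO_rpow _ _ _ (hγ_delay _).1 le_rfl) (hη_delay _).1
      (by linarith)
  · have hmαγ := hmα.mul_atTop_rpow_natCast_of_isBigO_rpow _ _ _ (hγ_delay (1 / 2)).1 le_rfl
    exact summable_mul_of_isBigO_natCast_rpow
      (hmαγ.mul_atTop_rpow_natCast_of_isBigO_rpow _ _ _ (hη_delay _).1 le_rfl) (isBigO_refl _ _)
      (by linarith)
  · exact summable_mul_of_isBigO_natCast_rpow hmαη (isBigO_refl _ _) (by linarith)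
  · exact summable_mul_of_isBigO_natCast_rpow
      (hmαη.mul_atTop_rpow_natCast_of_isBigO_rpow _ _ _
        (isBigO_comp_natCast_rpow hβ hn_theta) le_rfl)
      (isBigO_refl _ _) (by linarith)

/-- Verification of the coupled summability conditions 4) of Assumption 2 for
the polynomial step sizes `α_t = m^{−1/2} t^{−κ₁}`, `β_t = m^{−1/2} t^{−κ₂}`,
`η_t = m^{−1/2} t^{−κ₃}`, `γ_t = t^{−κ₄}` and the delayed index
`n_t = t − ⌈t^{3/5}⌉`, in the parameter region stated after Assumption 2
(all sums over `t ≥ 3`, index shifted by 3). -/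
theorem polynomial_step_sizes_satisfy_coupled_assumptions
    (κ₁ κ₂ κ₃ κ₄ m : ℝ)
    (h1 : 1 / 2 < κ₁) (h2 : κ₁ < 2 * κ₂ - 1) (h3 : 2 * κ₂ - 1 < 1)
    (h4 : 3 / 5 < κ₁ / 2 + κ₂ / 2 + κ₃ / 2 - 1 / 2) (h5 : 3 / 5 < κ₁ + κ₃)
    (h6 : κ₄ < 3 / 5) (h7 : 0 < κ₄)
    (h8 : 1 < κ₁ + κ₄ / 2 - κ₃ / 2) (h9 : 13 / 10 < κ₁ + κ₃ / 2 + κ₄ / 2)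
    (hm : 0 < m)
    (α β η γ : ℕ → ℝ) (n : ℕ → ℕ)
    (hα : ∀ t : ℕ, 1 ≤ t → α t = m ^ (-(1 / 2) : ℝ) * (t : ℝ) ^ (-κ₁))
    (hβ : ∀ t : ℕ, 1 ≤ t → β t = m ^ (-(1 / 2) : ℝ) * (t : ℝ) ^ (-κ₂))
    (hη : ∀ t : ℕ, 1 ≤ t → η t = m ^ (-(1 / 2) : ℝ) * (t : ℝ) ^ (-κ₃))
    (hγ : ∀ t : ℕ, 1 ≤ t → γ t = (t : ℝ) ^ (-κ₄))
    (hn : ∀ t : ℕ, n t = t - ⌈(t : ℝ) ^ ((3 : ℝ) / 5)⌉₊) :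
    Summable (fun t : ℕ =>
        α (t + 3) * (1 - γ (t + 3)) ^ ((((t + 3) - n (t + 3) : ℕ) : ℝ) / 2)
          * γ (n (t + 3)) ^ (-(1 / 2) : ℝ)) ∧
    Summable (fun t : ℕ =>
        α (t + 3) * γ (n (t + 3)) ^ ((1 : ℝ) / 2) * η (n (t + 3)) ^ (-(1 / 2) : ℝ)) ∧
    Summable (fun t : ℕ =>
        m * α (t + 3) * γ (n (t + 3)) ^ ((1 : ℝ) / 2) * η (n (t + 3)) ^ ((1 : ℝ) / 2)
          * ((t : ℝ) + 3) ^ ((3 : ℝ) / 10)) ∧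
    Summable (fun t : ℕ =>
        m * α (t + 3) * η (n (t + 3)) * ((t : ℝ) + 3) ^ (-((2 : ℝ) / 5))) ∧
    Summable (fun t : ℕ =>
        m * α (t + 3) * η (n (t + 3)) * β (n (t + 3)) * ((t : ℝ) + 3) ^ ((6 : ℝ) / 5)) := by
  have hc : 0 < m ^ (-(1 / 2) : ℝ) := Real.rpow_pos_of_pos hm _
  have hγ' : ∀ t : ℕ, 1 ≤ t → γ t = 1 * (t : ℝ) ^ (-κ₄) := by simpa only [one_mul] using hγ
  obtain ⟨h_i, h_ii, h_iii, h_iv, h_v⟩ :=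
    polynomial_step_sizes_satisfy_coupled_assumptions_general m
      (isTheta_natCast_rpow_of_eq_const_mul hc.ne' hα).1
      (isTheta_natCast_rpow_of_eq_const_mul hc.ne' hβ).1
      (isTheta_natCast_rpow_of_eq_const_mul hc.ne' hη)
      (eventually_nonneg_of_eq_const_mul_rpow hc.le hη)
      (isTheta_natCast_rpow_of_eq_const_mul one_ne_zero hγ')
      (eventually_nonneg_of_eq_const_mul_rpow zero_le_one hγ')
      hn (by norm_num) h7 h6 h8 (by linarith) h5 h4
  norm_num only at h_iii h_iv h_v
  rw [← summable_nat_add_iff 3] at h_i h_ii h_iii h_iv h_v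
  push_cast at h_iii h_iv h_v
  exact ⟨h_i, h_ii, h_iii, h_iv, h_v⟩
end
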